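/- arXiv:2104.12066 — 7 statements merged into one kernel-verified Lean document; each statement's English description precedes it below -/
import Mathlib

section
/- Let k > 0 be an integer and let (ℱ, 𝒱, wgt) be a k-fat finite weighted string-hypergraph with total edge weight δ. Let 𝒱* be the set of prefix-minimal elements of 𝒱 (those elements of 𝒱 having no proper prefix in 𝒱). Then Σ_{σ* ∈ 𝒱*} ( Σ_{σ ∈ 𝒱 with σ* a prefix of σ} ewt(σ) ) ≥ k·δ. -/
/-!
By double counting, the edge-weights of all vertices add up to `∑ E, |E| · wgt E`, which is at least
`k · δ` because every edge has at least `k` vertices. Since `𝒱` is finite, each vertex extends some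
prefix-minimal one, so its nonnegative edge-weight occurs at least once in the sum over `𝒱*`.
-/

open Finset

variable {ι α β M : Type*}

/-- The edge-weight `ewt(v)` of a vertex `v`: the total weight of the edges through `v`. Edges are
indexed by `F : Finset ι`, so that the same set of vertices may occur as several edges. -/
def edgeWeight [AddCommMonoid M] [DecidableEq α] (F : Finset ι) (edge : ι → Finset α) (w : ι → M)
    (v : α) : M :=
  ∑ e ∈ F with v ∈ edge e, w e

/-- The kernel `V*` of a finite set `V` with respect to a relation `r`: the elements of `V` to which
no other element of `V` is related. For the prefix order these are the prefix-minimal strings. -/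
def kernel [DecidableEq α] (r : α → α → Prop) [DecidableRel r] (V : Finset α) : Finset α :=
  {m ∈ V | ∀ v ∈ V, r v m → v = m}

theorem exists_mem_kernel_rel [DecidableEq α] (r : α → α → Prop) [DecidableRel r]
    [IsPartialOrder α r] {V : Finset α} {v : α} (hv : v ∈ V) : ∃ m ∈ kernel r V, r m v := by
  let _ : PartialOrder α :=
    { le := r
      le_refl := refl_of r
      le_trans := fun _ _ _ => trans_of r
      le_antisymm := fun _ _ => antisymm_of r }
  obtain ⟨m, hmv, hm⟩ := V.exists_le_minimal hv
  exact ⟨m, mem_filter.2 ⟨hm.prop, fun _ hu hum => hm.eq_of_le hu hum⟩, hmv⟩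

theorem sum_edgeWeight [AddCommMonoid M] [DecidableEq α] {V : Finset α} {F : Finset ι}
    {edge : ι → Finset α} (hsub : ∀ e ∈ F, edge e ⊆ V) (w : ι → M) :
    ∑ v ∈ V, edgeWeight F edge w v = ∑ e ∈ F, #(edge e) • w e :=
  calc ∑ v ∈ V, edgeWeight F edge w v
    _ = ∑ e ∈ F, ∑ _v ∈ edge e, w e := sum_comm' fun _ _ => by grind
    _ = ∑ e ∈ F, #(edge e) • w e := sum_congr rfl fun _ _ => sum_const _

section OrderedWeights

variable [AddCommMonoid M] [PartialOrder M] [IsOrderedAddMonoid M]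

theorem edgeWeight_nonneg [DecidableEq α] {F : Finset ι} {w : ι → M} (hw : ∀ e ∈ F, 0 ≤ w e)
    (edge : ι → Finset α) (v : α) : 0 ≤ edgeWeight F edge w v :=
  sum_nonneg fun e he => hw e (mem_filter.1 he).1

theorem nsmul_sum_le_sum_edgeWeight [DecidableEq α] {k : ℕ} {V : Finset α} {F : Finset ι}
    {edge : ι → Finset α} {w : ι → M} (hsub : ∀ e ∈ F, edge e ⊆ V) (hw : ∀ e ∈ F, 0 ≤ w e)
    (hfat : ∀ e ∈ F, k ≤ #(edge e)) :
    k • ∑ e ∈ F, w e ≤ ∑ v ∈ V, edgeWeight F edge w v := by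
  rw [sum_edgeWeight hsub, ← sum_nsmul]
  exact sum_le_sum fun e he => nsmul_le_nsmul_left (hw e he) (hfat e he)

theorem sum_le_sum_sum_of_forall_exists_rel {r : β → α → Prop} [∀ b a, Decidable (r b a)]
    {s : Finset α} {t : Finset β} {f : α → M} (hf : ∀ a ∈ s, 0 ≤ f a)
    (hcover : ∀ a ∈ s, ∃ b ∈ t, r b a) :
    ∑ a ∈ s, f a ≤ ∑ b ∈ t, ∑ a ∈ s with r b a, f a :=
  calc ∑ a ∈ s, f a
    _ ≤ ∑ a ∈ s, ∑ b ∈ t with r b a, f a := by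
        refine sum_le_sum fun a ha => ?_
        obtain ⟨b, hb, hba⟩ := hcover a ha
        exact single_le_sum (f := fun _ => f a) (fun _ _ => hf a ha) (mem_filter.2 ⟨hb, hba⟩)
    _ = ∑ b ∈ t, ∑ a ∈ s with r b a, f a :=
        (sum_sum_bipartiteAbove_eq_sum_sum_bipartiteBelow r fun _ a => f a).symm

theorem kernel_fatness_general [DecidableEq α] (r : α → α → Prop) [DecidableRel r]
    [IsPartialOrder α r] {k : ℕ} {V : Finset α} {F : Finset ι} {edge : ι → Finset α} {w : ι → M}
    (hsub : ∀ e ∈ F, edge e ⊆ V) (hw : ∀ e ∈ F, 0 ≤ w e) (hfat : ∀ e ∈ F, k ≤ #(edge e)) :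
    k • ∑ e ∈ F, w e ≤ ∑ m ∈ kernel r V, ∑ v ∈ V with r m v, edgeWeight F edge w v :=
  calc k • ∑ e ∈ F, w e
    _ ≤ ∑ v ∈ V, edgeWeight F edge w v := nsmul_sum_le_sum_edgeWeight hsub hw hfat
    _ ≤ ∑ m ∈ kernel r V, ∑ v ∈ V with r m v, edgeWeight F edge w v :=
        sum_le_sum_sum_of_forall_exists_rel (fun v _ => edgeWeight_nonneg hw edge v)
          fun _ hv => exists_mem_kernel_rel r hv

end OrderedWeights

/-- **Fatness lemma for kernels of string-hypergraphs.**
Let `(ℱ, 𝒱, wgt)` be a `k`-fat finite weighted string-hypergraph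
(vertices are binary strings, the weight of a vertex `σ` is `2^{-|σ|}`),
with total edge weight `δ`.  Let `𝒱*` be the set of prefix-minimal vertices.
Then the sum over `σ* ∈ 𝒱*` of the sums of the edge-weights of the vertices
extending `σ*` is at least `k·δ`. -/
theorem kernel_fatness (k : ℕ) (hk : 0 < k)
    (𝒱 : Finset (List Bool)) (ℱ : Finset (Finset (List Bool)))
    (wgt : Finset (List Bool) → ℝ)
    (hsub : ∀ E ∈ ℱ, E ⊆ 𝒱) (hw : ∀ E ∈ ℱ, 0 ≤ wgt E)
    (hfat : ∀ E ∈ ℱ, k ≤ E.card) :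
    (k : ℝ) * (∑ E ∈ ℱ, wgt E) ≤
      ∑ σs ∈ 𝒱.filter (fun σs => ∀ τ ∈ 𝒱, τ <+: σs → τ = σs),
        ∑ σ ∈ 𝒱.filter (fun σ => σs <+: σ),
          ∑ E ∈ ℱ.filter (fun E => σ ∈ E), wgt E := by
  rw [← nsmul_eq_mul]
  exact kernel_fatness_general (· <+: ·) (edge := id) hsub hw hfat
end

section
/- Let k > 0 be an integer and let (ℱ, 𝒱, wgt) be a k-fat finite weighted string-hypergraph whose vertex set 𝒱 is nonempty and prefix-free (no vertex is a proper prefix of another vertex), with total edge weight δ. Then there exists a vertex σ ∈ 𝒱 such that δ·k·2^{-|σ|} ≤ ewt(σ). -/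
/-!
Weigh every vertex `v` by `w v := |α|⁻¹ ^ |v|`. By Kraft's inequality a prefix-free vertex set has
total weight at most `1`, so the sum of `δ * k * w v` over all vertices is at most `δ * k`. Counting
incidences, the edge-weights of the vertices add up to `∑ E, wgt E * |E|`, which is at least `δ * k`
by fatness. Hence `δ * k * w v` is at most the edge-weight of `v` for some vertex `v`.
-/

open Finset InformationTheory

section Kraft

variable {α : Type*}

theorem uniquelyDecodable_of_isAntichain_prefix {S : Set (List α)}
    (hS : IsAntichain (· <+: ·) S) (hnil : [] ∉ S) : UniquelyDecodable S := by
  intro L₁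
  induction L₁ with
  | nil =>
    rintro (_ | ⟨w, L₂⟩) - hL₂ hflat
    · rfl
    · have hw : w = [] := by simp_all
      exact absurd (hw ▸ hL₂ w List.mem_cons_self) hnil
  | cons w₁ L₁ ih =>
    rintro (_ | ⟨w₂, L₂⟩) hL₁ hL₂ hflat
    · have hw : w₁ = [] := by simp_all
      exact absurd (hw ▸ hL₁ w₁ List.mem_cons_self) hnil
    · rw [List.forall_mem_cons] at hL₁ hL₂
      rw [List.flatten_cons, List.flatten_cons] at hflat
      obtain rfl : w₁ = w₂ := by
        rcases List.prefix_or_prefix_of_prefix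
          (List.prefix_append w₁ L₁.flatten) (hflat ▸ List.prefix_append w₂ L₂.flatten)
          with h | h
        · exact hS.eq hL₁.1 hL₂.1 h
        · exact (hS.eq hL₂.1 hL₁.1 h).symm
      rw [ih L₂ hL₁.2 hL₂.2 (List.append_cancel_left hflat)]

theorem kraft_inequality [Fintype α] [Nonempty α] {S : Finset (List α)}
    (hS : IsAntichain (· <+: ·) (S : Set (List α))) :
    ∑ σ ∈ S, (Fintype.card α : ℝ)⁻¹ ^ σ.length ≤ 1 := by
  by_cases hnil : [] ∈ S
  · have hS_eq : S = {[]} :=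
      eq_singleton_iff_unique_mem.2 ⟨hnil, fun σ hσ => (hS.eq hnil hσ List.nil_prefix).symm⟩
    simp [hS_eq]
  · simpa only [one_div] using
      kraft_mcmillan_inequality (uniquelyDecodable_of_isAntichain_prefix hS hnil)

end Kraft

section Hypergraph

variable {ι V M R : Type*} [DecidableEq V] {𝒱 : Finset V} {ℱ : Finset ι} {E : ι → Finset V}

theorem sum_sum_filter_mem_eq_sum_card_nsmul [AddCommMonoid M] (hE : ∀ i ∈ ℱ, E i ⊆ 𝒱)
    (wgt : ι → M) :
    ∑ v ∈ 𝒱, ∑ i ∈ ℱ with v ∈ E i, wgt i = ∑ i ∈ ℱ, #(E i) • wgt i := by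
  have incidence (v : V) (i : ι) :
      v ∈ 𝒱 ∧ i ∈ ℱ.filter (v ∈ E ·) ↔ v ∈ E i ∧ i ∈ ℱ := by
    rw [mem_filter]
    exact ⟨fun h => ⟨h.2.2, h.2.1⟩, fun h => ⟨hE i h.2 h.1, h.2, h.1⟩⟩
  simp_rw [sum_comm' incidence, sum_const]

theorem nsmul_sum_le_sum_sum_filter_mem [AddCommMonoid M] [PartialOrder M] [IsOrderedAddMonoid M]
    {k : ℕ} {wgt : ι → M} (hE : ∀ i ∈ ℱ, E i ⊆ 𝒱) (hwgt : ∀ i ∈ ℱ, 0 ≤ wgt i)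
    (hfat : ∀ i ∈ ℱ, k ≤ #(E i)) :
    k • ∑ i ∈ ℱ, wgt i ≤ ∑ v ∈ 𝒱, ∑ i ∈ ℱ with v ∈ E i, wgt i := by
  rw [sum_sum_filter_mem_eq_sum_card_nsmul hE, smul_sum]
  exact sum_le_sum fun i hi => nsmul_le_nsmul_left (hwgt i hi) (hfat i hi)

theorem exists_sum_mul_weight_le_sum_filter_mem [Semiring R] [LinearOrder R]
    [IsStrictOrderedRing R] {k : ℕ} {w : V → R} {wgt : ι → R} (h𝒱 : 𝒱.Nonempty)
    (hw : ∑ v ∈ 𝒱, w v ≤ 1) (hE : ∀ i ∈ ℱ, E i ⊆ 𝒱) (hwgt : ∀ i ∈ ℱ, 0 ≤ wgt i)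
    (hfat : ∀ i ∈ ℱ, k ≤ #(E i)) :
    ∃ v ∈ 𝒱, (∑ i ∈ ℱ, wgt i) * k * w v ≤ ∑ i ∈ ℱ with v ∈ E i, wgt i := by
  have total_nonneg : 0 ≤ (∑ i ∈ ℱ, wgt i) * k := mul_nonneg (sum_nonneg hwgt) k.cast_nonneg
  refine exists_le_of_sum_le h𝒱 ?_
  calc ∑ v ∈ 𝒱, (∑ i ∈ ℱ, wgt i) * k * w v
      = (∑ i ∈ ℱ, wgt i) * k * ∑ v ∈ 𝒱, w v := (mul_sum ..).symm
    _ ≤ (∑ i ∈ ℱ, wgt i) * k := mul_le_of_le_one_right total_nonneg hw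
    _ = k • ∑ i ∈ ℱ, wgt i := (nsmul_eq_mul' ..).symm
    _ ≤ ∑ v ∈ 𝒱, ∑ i ∈ ℱ with v ∈ E i, wgt i := nsmul_sum_le_sum_sum_filter_mem hE hwgt hfat

end Hypergraph

theorem light_vertex_general {ι α : Type*} [Fintype α] [Nonempty α] [DecidableEq α] {k : ℕ}
    {𝒱 : Finset (List α)} (h𝒱 : 𝒱.Nonempty) (hpf : IsAntichain (· <+: ·) (𝒱 : Set (List α)))
    {ℱ : Finset ι} {E : ι → Finset (List α)} {wgt : ι → ℝ} (hE : ∀ i ∈ ℱ, E i ⊆ 𝒱)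
    (hwgt : ∀ i ∈ ℱ, 0 ≤ wgt i) (hfat : ∀ i ∈ ℱ, k ≤ #(E i)) :
    ∃ σ ∈ 𝒱, (∑ i ∈ ℱ, wgt i) * k * (Fintype.card α : ℝ)⁻¹ ^ σ.length ≤
      ∑ i ∈ ℱ with σ ∈ E i, wgt i :=
  exists_sum_mul_weight_le_sum_filter_mem h𝒱 (kraft_inequality hpf) hE hwgt hfat

/-- **Light vertices in kernels.**
Let `(ℱ, 𝒱, wgt)` be a `k`-fat finite weighted string-hypergraph whose
(nonempty) vertex set `𝒱` is prefix-free, with total edge weight `δ`.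
Then some vertex `σ ∈ 𝒱` satisfies `δ·k·2^{-|σ|} ≤ ewt(σ)`, i.e. its weight
`2^{-|σ|}` is at most `ewt(σ)/(δ·k)`. -/
theorem light_vertex (k : ℕ) (hk : 0 < k)
    (𝒱 : Finset (List Bool)) (h𝒱 : 𝒱.Nonempty)
    (hpf : ∀ σ ∈ 𝒱, ∀ τ ∈ 𝒱, σ <+: τ → σ = τ)
    (ℱ : Finset (Finset (List Bool))) (wgt : Finset (List Bool) → ℝ)
    (hsub : ∀ E ∈ ℱ, E ⊆ 𝒱) (hw : ∀ E ∈ ℱ, 0 ≤ wgt E)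
    (hfat : ∀ E ∈ ℱ, k ≤ E.card) :
    ∃ σ ∈ 𝒱, (∑ E ∈ ℱ, wgt E) * (k : ℝ) * (2 : ℝ)⁻¹ ^ σ.length ≤
      ∑ E ∈ ℱ.filter (fun E => σ ∈ E), wgt E := by
  have antichain : IsAntichain (· <+: ·) (𝒱 : Set (List Bool)) :=
    fun σ hσ τ hτ hne hprefix => hne (hpf σ hσ τ hτ hprefix)
  simpa using light_vertex_general (E := id) h𝒱 antichain hsub hw hfat
end

section
/- If Q is a prefix-free set of strings and R is any set of strings, then μ(⟦Q∗R⟧) = μ(⟦Q⟧) · μ(⟦R⟧). -/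
open MeasureTheory

/-- The first `n` bits of `x ∈ 2^ω`, as a string. -/
def seg (x : ℕ → Bool) (n : ℕ) : List Bool := List.ofFn (fun i : Fin n => x i)

/-- The cylinder of a string: all `x ∈ 2^ω` with `σ` as a prefix. -/
def cyl (σ : List Bool) : Set (ℕ → Bool) := {x | seg x σ.length = σ}

/-- The open set generated by a set of strings. -/
def cylSet (V : Set (List Bool)) : Set (ℕ → Bool) := ⋃ σ ∈ V, cyl σ

/-- Concatenation of sets of strings: `Q∗R = {σ ++ ρ : σ ∈ Q, ρ ∈ R}`. -/
def starSet (Q R : Set (List Bool)) : Set (List Bool) :=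
  {l | ∃ σ ∈ Q, ∃ ρ ∈ R, l = σ ++ ρ}

/-!
Replacing `R` by its prefix-minimal strings changes neither `⟦R⟧` nor `⟦Q∗R⟧`, so both factors may
be taken prefix-free. Then `Q∗R` is prefix-free too and each of its strings splits uniquely as
`σ ++ ρ`. The cylinders of a prefix-free set are disjoint, so all three measures are sums over
strings, and `μ⟦σ ++ ρ⟧ = μ⟦σ⟧ · μ⟦ρ⟧` turns the sum over `Q∗R` into a product of sums.
-/

section Prefix

variable {α : Type*} {Q R : Set (List α)} {σ τ ρ υ : List α}

/-- The strings of `R` with no proper prefix in `R`: the minimal elements of `R` for the prefix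
order. `Minimal` does not apply, because `≤` on lists is the lexicographic order. -/
def prefixMinimals (R : Set (List α)) : Set (List α) :=
  {ρ ∈ R | ∀ τ ∈ R, τ <+: ρ → τ = ρ}

lemma prefixMinimals_subset (R : Set (List α)) : prefixMinimals R ⊆ R :=
  Set.sep_subset _ _

lemma isAntichain_prefixMinimals (R : Set (List α)) : IsAntichain (· <+: ·) (prefixMinimals R) :=
  fun _ hτ _ hρ hne hpre => hne (hρ.2 _ hτ.1 hpre)

lemma exists_prefix_mem_prefixMinimals (hρ : ρ ∈ R) : ∃ τ ∈ prefixMinimals R, τ <+: ρ := by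
  obtain ⟨τ, ⟨hτR, hτρ⟩, hshortest⟩ :=
    exists_minimalFor_of_wellFoundedLT (fun τ => τ ∈ R ∧ τ <+: ρ) List.length
      ⟨ρ, hρ, List.prefix_rfl⟩
  refine ⟨τ, ⟨hτR, fun υ hυR hυτ => ?_⟩, hτρ⟩
  exact hυτ.eq_of_length_le (hshortest ⟨hυR, hυτ.trans hτρ⟩ hυτ.length_le)

lemma eq_and_prefix_of_append_prefix_append (hQ : IsAntichain (· <+: ·) Q) (hσ : σ ∈ Q)
    (hτ : τ ∈ Q) (h : σ ++ ρ <+: τ ++ υ) : σ = τ ∧ ρ <+: υ := by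
  have hcomparable : σ <+: τ ∨ τ <+: σ :=
    List.prefix_or_prefix_of_prefix ((List.prefix_append σ ρ).trans h) (List.prefix_append τ υ)
  obtain rfl : σ = τ := hcomparable.elim (hQ.eq hσ hτ) (hQ.eq' hσ hτ)
  exact ⟨rfl, (List.prefix_append_right_inj σ).1 h⟩

lemma injOn_append_prod (hQ : IsAntichain (· <+: ·) Q) (R : Set (List α)) :
    Set.InjOn (fun p : List α × List α => p.1 ++ p.2) (Q ×ˢ R) := by
  rintro ⟨σ, ρ⟩ ⟨hσ, -⟩ ⟨τ, υ⟩ ⟨hτ, -⟩ (h : σ ++ ρ = τ ++ υ)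
  have hpre : σ ++ ρ <+: τ ++ υ := h ▸ List.prefix_rfl
  obtain ⟨rfl, -⟩ := eq_and_prefix_of_append_prefix_append hQ hσ hτ hpre
  rw [List.append_cancel_left h]

end Prefix

section StarSet

variable {Q R : Set (List Bool)}

lemma starSet_eq_image_prod (Q R : Set (List Bool)) :
    starSet Q R = (fun p : List Bool × List Bool => p.1 ++ p.2) '' (Q ×ˢ R) := by
  ext l
  simp only [starSet, Set.mem_ofPred_eq, Set.mem_image, Set.mem_prod, Prod.exists]
  grind

lemma starSet_subset_left {R' : Set (List Bool)} (Q : Set (List Bool)) (h : R ⊆ R') :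
    starSet Q R ⊆ starSet Q R' := by
  rintro _ ⟨σ, hσ, ρ, hρ, rfl⟩
  exact ⟨σ, hσ, ρ, h hρ, rfl⟩

lemma isAntichain_starSet (hQ : IsAntichain (· <+: ·) Q) (hR : IsAntichain (· <+: ·) R) :
    IsAntichain (· <+: ·) (starSet Q R) := by
  rintro _ ⟨σ, hσ, ρ, hρ, rfl⟩ _ ⟨τ, hτ, υ, hυ, rfl⟩ hne hpre
  obtain ⟨rfl, hρυ⟩ := eq_and_prefix_of_append_prefix_append hQ hσ hτ hpre
  exact hne (congrArg (σ ++ ·) (hR.eq hρ hυ hρυ))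

lemma tsum_starSet (hQ : IsAntichain (· <+: ·) Q) (R : Set (List Bool))
    (f : List Bool → ENNReal) :
    ∑' l : starSet Q R, f l = ∑' (σ : Q) (ρ : R), f (σ ++ ρ) := by
  rw [starSet_eq_image_prod, tsum_image f (injOn_append_prod hQ R),
    ← (Equiv.Set.prod Q R).symm.tsum_eq, ENNReal.tsum_prod']
  rfl

end StarSet

section Cylinders

variable {V W : Set (List Bool)} {σ τ : List Bool} {x : ℕ → Bool}

lemma mem_cyl_iff_getElem : x ∈ cyl σ ↔ ∀ i (hi : i < σ.length), x i = σ[i] := by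
  simp [cyl, seg, List.ext_getElem_iff]

lemma measurableSet_cyl (σ : List Bool) : MeasurableSet (cyl σ) := by
  have hcyl : cyl σ = (fun x (i : Fin σ.length) => x i) ⁻¹' {σ.get} := by
    ext x
    simp [mem_cyl_iff_getElem, funext_iff, Fin.forall_iff]
  rw [hcyl]
  exact (by fun_prop : Measurable _) (measurableSet_singleton _)

lemma cyl_subset_cyl (h : σ <+: τ) : cyl τ ⊆ cyl σ := by
  intro x hx
  rw [mem_cyl_iff_getElem] at hx ⊢
  intro i hi
  rw [hx i (hi.trans_le h.length_le), h.getElem hi]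

lemma prefix_of_mem_cyl (hσ : x ∈ cyl σ) (hτ : x ∈ cyl τ) (hle : σ.length ≤ τ.length) :
    σ <+: τ := by
  rw [mem_cyl_iff_getElem] at hσ hτ
  exact List.prefix_iff_getElem.2
    ⟨hle, fun i hi => (hσ i hi).symm.trans (hτ i (hi.trans_le hle))⟩

lemma pairwiseDisjoint_cyl (hV : IsAntichain (· <+: ·) V) : V.PairwiseDisjoint cyl := by
  refine fun σ hσ τ hτ hne => Set.disjoint_left.2 fun x hxσ hxτ => hne ?_
  rcases le_total σ.length τ.length with hle | hle
  · exact hV.eq hσ hτ (prefix_of_mem_cyl hxσ hxτ hle)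
  · exact hV.eq' hσ hτ (prefix_of_mem_cyl hxτ hxσ hle)

lemma cylSet_mono (h : V ⊆ W) : cylSet V ⊆ cylSet W :=
  Set.biUnion_subset_biUnion_left h

lemma cylSet_subset_cylSet_of_exists_prefix_mem (h : ∀ σ ∈ V, ∃ τ ∈ W, τ <+: σ) :
    cylSet V ⊆ cylSet W :=
  Set.iUnion₂_subset fun σ hσ =>
    let ⟨_, hτ, hτσ⟩ := h σ hσ
    (cyl_subset_cyl hτσ).trans (Set.subset_biUnion_of_mem hτ)

lemma cylSet_prefixMinimals (R : Set (List Bool)) : cylSet (prefixMinimals R) = cylSet R :=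
  (cylSet_mono (prefixMinimals_subset R)).antisymm <|
    cylSet_subset_cylSet_of_exists_prefix_mem fun _ => exists_prefix_mem_prefixMinimals

lemma cylSet_starSet_prefixMinimals (Q R : Set (List Bool)) :
    cylSet (starSet Q (prefixMinimals R)) = cylSet (starSet Q R) := by
  refine (cylSet_mono (starSet_subset_left Q (prefixMinimals_subset R))).antisymm <|
    cylSet_subset_cylSet_of_exists_prefix_mem ?_
  rintro _ ⟨σ, hσ, ρ, hρ, rfl⟩
  obtain ⟨τ, hτ, hτρ⟩ := exists_prefix_mem_prefixMinimals hρ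
  exact ⟨σ ++ τ, ⟨σ, hσ, τ, hτ, rfl⟩, (List.prefix_append_right_inj σ).2 hτρ⟩

lemma measure_cylSet (μ : Measure (ℕ → Bool)) (hV : IsAntichain (· <+: ·) V) :
    μ (cylSet V) = ∑' σ : V, μ (cyl σ) :=
  measure_biUnion V.to_countable (pairwiseDisjoint_cyl hV) fun σ _ => measurableSet_cyl σ

end Cylinders

/-- `hμ` holds for the law of independent coin tosses with any fixed bias. -/
theorem measure_starSet_general (μ : Measure (ℕ → Bool))
    (hμ : ∀ σ ρ : List Bool, μ (cyl (σ ++ ρ)) = μ (cyl σ) * μ (cyl ρ))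
    (Q R : Set (List Bool)) (hQ : IsAntichain (· <+: ·) Q) :
    μ (cylSet (starSet Q R)) = μ (cylSet Q) * μ (cylSet R) := by
  have hR := isAntichain_prefixMinimals R
  calc μ (cylSet (starSet Q R))
    _ = μ (cylSet (starSet Q (prefixMinimals R))) := by rw [cylSet_starSet_prefixMinimals]
    _ = ∑' l : starSet Q (prefixMinimals R), μ (cyl l) :=
      measure_cylSet μ (isAntichain_starSet hQ hR)
    _ = ∑' (σ : Q) (ρ : prefixMinimals R), μ (cyl (σ ++ ρ)) :=
      tsum_starSet hQ _ fun l => μ (cyl l)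
    _ = (∑' σ : Q, μ (cyl σ)) * ∑' ρ : prefixMinimals R, μ (cyl ρ) := by
      simp only [hμ, ENNReal.tsum_mul_left, ENNReal.tsum_mul_right]
    _ = μ (cylSet Q) * μ (cylSet R) := by
      rw [← measure_cylSet μ hQ, ← measure_cylSet μ hR, cylSet_prefixMinimals]

/-- If `Q` is a prefix-free set of strings and `R` is any set of strings,
then `μ(⟦Q∗R⟧) = μ(⟦Q⟧)·μ(⟦R⟧)`, where `μ` is the fair-coin measure on
`2^ω` (characterized by its values on cylinders). -/
theorem measure_starSet (μ : Measure (ℕ → Bool))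
    (hμ : ∀ σ : List Bool, μ (cyl σ) = (2 : ENNReal)⁻¹ ^ σ.length)
    (Q R : Set (List Bool))
    (hQ : ∀ σ ∈ Q, ∀ τ ∈ Q, σ <+: τ → σ = τ) :
    μ (cylSet (starSet Q R)) = μ (cylSet Q) * μ (cylSet R) := by
  exact measure_starSet_general μ (fun σ ρ => by simp only [hμ, List.length_append, pow_add]) Q R
    fun σ hσ τ hτ hne hpre => hne (hQ σ hσ τ hτ hpre)
end

section
/- Let T be a nonempty closed subset of 2^ω and let Q be a set of nonempty strings such that for every string σ with T ∩ ⟦σ⟧ ≠ ∅ there exists τ ∈ Q with T ∩ ⟦σ ++ τ⟧ ≠ ∅. Then there exists x ∈ T such that x ∈ ⟦Q^n⟧ for every n ≥ 1. -/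
open MeasureTheory

/-- Iterated concatenation: `Q^1 = Q`, `Q^{n+1} = Q^n ∗ Q`
(with `Q^0 = {[]}`, the empty string). -/
def powSet (Q : Set (List Bool)) : ℕ → Set (List Bool)
  | 0 => {[]}
  | n + 1 => starSet (powSet Q n) Q

/-!
Starting from the empty string, repeatedly append a string of `Q` so that the cylinder still meets
`T`. This produces an increasing chain of strings, the `n`-th one in `Q^n`, and by compactness of
Cantor space a single point of `T` extends all of them.
-/

theorem mem_cyl_iff {σ : List Bool} {x : ℕ → Bool} :
    x ∈ cyl σ ↔ ∀ (i : ℕ) (hi : i < σ.length), x i = σ[i] := by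
  simp [cyl, seg, List.ext_getElem_iff]

theorem cyl_nil : cyl [] = Set.univ :=
  Set.eq_univ_of_forall fun _ => rfl

theorem cyl_subset_cyl_of_prefix {σ τ : List Bool} (hστ : σ <+: τ) : cyl τ ⊆ cyl σ := by
  intro x hx
  rw [mem_cyl_iff] at hx ⊢
  intro i hi
  rw [hx i (hi.trans_le hστ.length_le), hστ.getElem hi]

theorem isClosed_cyl (σ : List Bool) : IsClosed (cyl σ) := by
  have cyl_eq_iInter : cyl σ = ⋂ (i : ℕ) (hi : i < σ.length), {x | x i = σ[i]} := by
    ext x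
    simp only [mem_cyl_iff, Set.mem_iInter, Set.mem_ofPred_eq]
  rw [cyl_eq_iInter]
  exact isClosed_iInter fun i => isClosed_iInter fun _ =>
    isClosed_eq (continuous_apply i) continuous_const

theorem exists_mem_forall_mem_cyl_of_prefix_chain {T : Set (ℕ → Bool)} (hT : IsClosed T)
    {s : ℕ → List Bool} (hs : ∀ n, s n <+: s (n + 1)) (hne : ∀ n, (T ∩ cyl (s n)).Nonempty) :
    ∃ x ∈ T, ∀ n, x ∈ cyl (s n) := by
  have hclosed (n : ℕ) : IsClosed (T ∩ cyl (s n)) := hT.inter (isClosed_cyl _)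
  obtain ⟨x, hx⟩ := IsCompact.nonempty_iInter_of_sequence_nonempty_isCompact_isClosed
    (fun n => T ∩ cyl (s n))
    (fun n => Set.inter_subset_inter_right T (cyl_subset_cyl_of_prefix (hs n)))
    hne (hclosed 0).isCompact hclosed
  rw [Set.mem_iInter] at hx
  exact ⟨x, (hx 0).1, fun n => (hx n).2⟩

theorem exists_prefix_chain_mem_powSet {Q : Set (List Bool)} {P : List Bool → Prop}
    (nil : P []) (append : ∀ σ, P σ → ∃ τ ∈ Q, P (σ ++ τ)) :
    ∃ s : ℕ → List Bool,
      (∀ n, s n <+: s (n + 1)) ∧ (∀ n, s n ∈ powSet Q n) ∧ ∀ n, P (s n) := by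
  choose! next next_mem next_append using append
  let s (n : ℕ) : List Bool := (fun σ => σ ++ next σ)^[n] []
  have s_succ (n : ℕ) : s (n + 1) = s n ++ next (s n) := Function.iterate_succ_apply' _ n _
  have hP (n : ℕ) : P (s n) := by
    induction n with
    | zero => exact nil
    | succ n ih => exact s_succ n ▸ next_append _ ih
  have hpow (n : ℕ) : s n ∈ powSet Q n := by
    induction n with
    | zero => exact Set.mem_singleton _
    | succ n ih => exact ⟨s n, ih, next (s n), next_mem _ (hP n), s_succ n⟩
  exact ⟨s, fun n => ⟨next (s n), (s_succ n).symm⟩, hpow, hP⟩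

/-- Let `T` be a nonempty closed subset of Cantor space and `Q` a set of
nonempty strings such that every cylinder `⟦σ⟧` meeting `T` has a
sub-cylinder `⟦σ ++ τ⟧` (with `τ ∈ Q`) meeting `T`.  Then some `x ∈ T`
belongs to `⟦Q^n⟧` for every `n ≥ 1`. -/
theorem path_in_all_powSet (T : Set (ℕ → Bool)) (hTc : IsClosed T)
    (hTne : T.Nonempty)
    (Q : Set (List Bool)) (hQ : ∀ τ ∈ Q, τ ≠ [])
    (h : ∀ σ : List Bool, (T ∩ cyl σ).Nonempty →
      ∃ τ ∈ Q, (T ∩ cyl (σ ++ τ)).Nonempty) :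
    ∃ x ∈ T, ∀ n : ℕ, x ∈ cylSet (powSet Q (n + 1)) := by
  have nil_meets : (T ∩ cyl []).Nonempty := by rwa [cyl_nil, Set.inter_univ]
  obtain ⟨s, hchain, hpow, hmeets⟩ :=
    exists_prefix_chain_mem_powSet (P := fun σ => (T ∩ cyl σ).Nonempty) nil_meets h
  obtain ⟨x, hxT, hx⟩ := exists_mem_forall_mem_cyl_of_prefix_chain hTc hchain hmeets
  exact ⟨x, hxT, fun n => Set.mem_biUnion (hpow (n + 1)) (hx (n + 1))⟩
end

section
/- For every measurable set A ⊆ 2^ω and μ-almost every x ∈ A, the limit as n → ∞ of 2^n · μ(A ∩ ⟦x↾n⟧) equals 1. -/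
open MeasureTheory Filter

/-!
The filtration generated by the first `n` coordinates has the cylinders of length `n` as atoms, so
the conditional expectation of `f` with respect to it is, almost everywhere, the average of `f` over
the cylinder around the point; the cylinders of measure zero, on which the average is a junk value,
are countably many and cover only a null set. Lévy's upward theorem makes these averages converge
almost everywhere to `f`, and `f = 𝟙_A` gives the density theorem.
-/

open ProbabilityTheory Topology

section Fiber

variable {Ω β E : Type*} {m0 : MeasurableSpace Ω} {μ : Measure Ω}

theorem ae_measure_fiber_ne_zero [Countable β] (p : Ω → β) : ∀ᵐ x ∂μ, μ (p ⁻¹' {p x}) ≠ 0 := by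
  have null_iUnion : μ (⋃ b ∈ {b | μ (p ⁻¹' {b}) = 0}, p ⁻¹' {b}) = 0 :=
    (measure_biUnion_null_iff (Set.to_countable _)).2 fun _ hb ↦ hb
  refine measure_mono_null (fun x hx ↦ ?_) null_iUnion
  exact Set.mem_biUnion (not_not.1 hx) rfl

theorem setAverage_indicator_one {A : Set Ω} (hA : NullMeasurableSet A μ) (s : Set Ω) :
    ⨍ y in s, A.indicator 1 y ∂μ = (μ[|s]).real A := by
  calc
    ⨍ y in s, A.indicator 1 y ∂μ = ∫ y, A.indicator (1 : Ω → ℝ) y ∂μ[|s] := setAverage_eq' _ _ _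
    _ = ∫ _ in A, (1 : ℝ) ∂μ[|s] := integral_indicator₀ (hA.mono_ac cond_absolutelyContinuous)
    _ = (μ[|s]).real A := by simp

variable [mβ : MeasurableSpace β] [NormedAddCommGroup E] [NormedSpace ℝ E] [CompleteSpace E]

theorem condExp_comap_ae_eq_setAverage [Countable β] [MeasurableSingletonClass β]
    [IsFiniteMeasure μ] {p : Ω → β} (hp : Measurable p) {f : Ω → E} (hf : Integrable f μ) :
    μ[f | mβ.comap p] =ᵐ[μ] fun x ↦ ⨍ y in p ⁻¹' {p x}, f y ∂μ := by
  filter_upwards [ae_measure_fiber_ne_zero p] with x hx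
  set g := μ[f | mβ.comap p]
  have g_eq_on_fiber : ∀ y ∈ p ⁻¹' {p x}, g x = g y := fun _ hy ↦
    stronglyMeasurable_condExp.factorsThrough (Eq.symm hy)
  have hfiber : MeasurableSet (p ⁻¹' {p x}) := hp (measurableSet_singleton _)
  calc
    g x = ⨍ _ in p ⁻¹' {p x}, g x ∂μ := (setAverage_const hx (measure_ne_top _ _) _).symm
    _ = ⨍ y in p ⁻¹' {p x}, g y ∂μ := setAverage_congr_fun hfiber (ae_of_all _ g_eq_on_fiber)
    _ = ⨍ y in p ⁻¹' {p x}, f y ∂μ := by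
      rw [setAverage_eq, setAverage_eq,
        setIntegral_condExp hp.comap_le hf ⟨_, measurableSet_singleton _, rfl⟩]

end Fiber

section Filtration

variable {Ω : Type*} {m0 : MeasurableSpace Ω} {μ : Measure Ω} [IsFiniteMeasure μ]
  {𝓕 : Filtration ℕ m0} {f : Ω → ℝ}

theorem ae_tendsto_condExp_of_iSup_eq (h𝓕 : ⨆ n, 𝓕 n = m0) (hf : Integrable f μ) :
    ∀ᵐ x ∂μ, Tendsto (fun n ↦ (μ[f | 𝓕 n]) x) atTop (𝓝 (f x)) := by
  have hmk : f =ᵐ[μ] hf.1.mk f := hf.1.ae_eq_mk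
  have condExp_mk : ∀ᵐ x ∂μ, ∀ n, (μ[f | 𝓕 n]) x = (μ[hf.1.mk f | 𝓕 n]) x :=
    ae_all_iff.2 fun _ ↦ condExp_congr_ae hmk
  have mk_tendsto := (hf.congr hmk).tendsto_ae_condExp (ℱ := 𝓕)
    (by rw [h𝓕]; exact hf.1.stronglyMeasurable_mk)
  filter_upwards [hmk, condExp_mk, mk_tendsto] with x hx hcond hlim
  simpa only [hx, hcond] using hlim

theorem ae_tendsto_setAverage_fiber {β : ℕ → Type*} [mβ : ∀ n, MeasurableSpace (β n)]
    [∀ n, Countable (β n)] [∀ n, MeasurableSingletonClass (β n)] {p : ∀ n, Ω → β n}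
    (hp : ∀ n, 𝓕 n = (mβ n).comap (p n)) (h𝓕 : ⨆ n, 𝓕 n = m0)
    (hf : Integrable f μ) :
    ∀ᵐ x ∂μ, Tendsto (fun n ↦ ⨍ y in p n ⁻¹' {p n x}, f y ∂μ) atTop (𝓝 (f x)) := by
  have p_measurable (n : ℕ) : Measurable (p n) := measurable_iff_comap_le.2 (hp n ▸ 𝓕.le n)
  have condExp_eq : ∀ᵐ x ∂μ, ∀ n, (μ[f | 𝓕 n]) x = ⨍ y in p n ⁻¹' {p n x}, f y ∂μ :=
    ae_all_iff.2 fun n ↦ hp n ▸ condExp_comap_ae_eq_setAverage (p_measurable n) hf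
  filter_upwards [condExp_eq, ae_tendsto_condExp_of_iSup_eq h𝓕 hf] with x hx hlim
  simpa only [hx] using hlim

end Filtration

section Cylinder

variable {E : ℕ → Type*}

theorem preimage_restrict_range_eq_cylinder (x : ∀ n, E n) (n : ℕ) :
    (Finset.range n).restrict ⁻¹' {(Finset.range n).restrict x} = PiNat.cylinder x n := by
  ext y
  simp [funext_iff, PiNat.mem_cylinder_iff]

variable [∀ n, MeasurableSpace (E n)]

variable (E) in
/-- The canonical filtration of the sequence space `∀ n, E n`, whose `n`-th term is generated by the
`n` coordinates below `n`, so that its atoms are the sets `PiNat.cylinder x n`. -/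
def cylinderFiltration : Filtration ℕ (MeasurableSpace.pi : MeasurableSpace (∀ n, E n)) where
  seq n := Filtration.piFinset (Finset.range n)
  mono' _ _ hmn := Filtration.piFinset.mono (Finset.range_mono hmn)
  le' n := Filtration.piFinset.le (Finset.range n)

theorem iSup_cylinderFiltration : ⨆ n, cylinderFiltration E n = MeasurableSpace.pi := by
  refine le_antisymm (iSup_le (cylinderFiltration E).le) (iSup_le fun i ↦ ?_)
  have eval_measurable : Measurable[cylinderFiltration E (i + 1)] fun x : ∀ n, E n ↦ x i :=
    (measurable_pi_apply (⟨i, Finset.self_mem_range_succ i⟩ : Finset.range (i + 1))).comp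
      (comap_measurable (Finset.range (i + 1)).restrict)
  exact eval_measurable.comap_le.trans (le_iSup (cylinderFiltration E) (i + 1))

variable [∀ n, MeasurableSingletonClass (E n)]

theorem measurableSet_cylinder (x : ∀ n, E n) (n : ℕ) : MeasurableSet (PiNat.cylinder x n) := by
  rw [PiNat.cylinder_eq_pi]
  exact .pi (Set.to_countable _) fun _ _ ↦ measurableSet_singleton _

variable [∀ n, Countable (E n)] {μ : Measure (∀ n, E n)} [IsFiniteMeasure μ]

theorem ae_tendsto_setAverage_cylinder {f : (∀ n, E n) → ℝ} (hf : Integrable f μ) :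
    ∀ᵐ x ∂μ, Tendsto (fun n ↦ ⨍ y in PiNat.cylinder x n, f y ∂μ) atTop (𝓝 (f x)) := by
  simpa only [preimage_restrict_range_eq_cylinder] using
    ae_tendsto_setAverage_fiber (𝓕 := cylinderFiltration E) (p := fun n ↦ (Finset.range n).restrict)
      (fun _ ↦ rfl) iSup_cylinderFiltration hf

theorem lebesgue_density_general {A : Set (∀ n, E n)} (hA : NullMeasurableSet A μ) :
    ∀ᵐ x ∂μ, x ∈ A → Tendsto (fun n ↦ (μ[|PiNat.cylinder x n]).real A) atTop (𝓝 1) := by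
  have indicator_integrable : Integrable (A.indicator (1 : (∀ n, E n) → ℝ)) μ :=
    (integrable_const 1).indicator₀ hA
  filter_upwards [ae_tendsto_setAverage_cylinder indicator_integrable] with x hx hxA
  simpa only [setAverage_indicator_one hA, Set.indicator_of_mem hxA, Pi.one_apply] using hx

end Cylinder

section FairCoin

theorem cyl_seg_eq_cylinder (x : ℕ → Bool) (n : ℕ) : cyl (seg x n) = PiNat.cylinder x n := by
  ext y
  simp [cyl, seg, List.ofFn_inj, funext_iff, Fin.forall_iff, PiNat.mem_cylinder_iff]

variable {μ : Measure (ℕ → Bool)}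

theorem isProbabilityMeasure_of_measure_cyl
    (hμ : ∀ σ : List Bool, μ (cyl σ) = (2 : ENNReal)⁻¹ ^ σ.length) : IsProbabilityMeasure μ :=
  ⟨by simpa [cyl, seg] using hμ []⟩

theorem cond_cylinder_real_eq
    (hμ : ∀ σ : List Bool, μ (cyl σ) = (2 : ENNReal)⁻¹ ^ σ.length)
    (x : ℕ → Bool) (n : ℕ) (A : Set (ℕ → Bool)) :
    (μ[|PiNat.cylinder x n]).real A = 2 ^ n * (μ (A ∩ cyl (seg x n))).toReal := by
  have measure_cylinder : μ (PiNat.cylinder x n) = 2⁻¹ ^ n := by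
    rw [← cyl_seg_eq_cylinder, hμ, seg, List.length_ofFn]
  rw [Measure.real, cond_apply (measurableSet_cylinder x n), measure_cylinder,
    cyl_seg_eq_cylinder, Set.inter_comm]
  simp

end FairCoin

/-- **Lebesgue density theorem for Cantor space.**
For every measurable `A ⊆ 2^ω` and `μ`-almost every `x ∈ A`,
`2^n · μ(A ∩ ⟦x↾n⟧) → 1` as `n → ∞`, where `μ` is the fair-coin measure
(characterized by its values on cylinders). -/
theorem lebesgue_density (μ : Measure (ℕ → Bool))
    (hμ : ∀ σ : List Bool, μ (cyl σ) = (2 : ENNReal)⁻¹ ^ σ.length)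
    (A : Set (ℕ → Bool)) (hA : MeasurableSet A) :
    ∀ᵐ x ∂μ, x ∈ A →
      Tendsto (fun n : ℕ => (2 : ℝ) ^ n * (μ (A ∩ cyl (seg x n))).toReal)
        atTop (nhds 1) := by
  have := isProbabilityMeasure_of_measure_cyl hμ
  simpa only [cond_cylinder_real_eq hμ] using
    lebesgue_density_general (μ := μ) hA.nullMeasurableSet
end

section
/- Let d be a lower density function and let T be an infinite, strongly positive, d-dense tree. Let E = T ∩ 2^l for some l at least the common length of the strings in ⟨d⟩. Then there exists a lower density function e with domain ⟨e⟩ = E such that e extends d and T is e-dense. -/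
open MeasureTheory

/-- A tree: a set of strings closed under prefixes. -/
def IsTree (T : Set (List Bool)) : Prop :=
  ∀ σ ∈ T, ∀ τ : List Bool, τ <+: σ → τ ∈ T

/-- The paths of a tree: those `x ∈ 2^ω` all of whose prefixes are in `T`. -/
def paths (T : Set (List Bool)) : Set (ℕ → Bool) := {x | ∀ n, seg x n ∈ T}

/-- Relative measure: `μ_τ(A) = 2^{|τ|} · μ(A ∩ ⟦τ⟧)`. -/
noncomputable def relMeasure (μ : Measure (ℕ → Bool)) (τ : List Bool)
    (A : Set (ℕ → Bool)) : ℝ :=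
  2 ^ τ.length * (μ (A ∩ cyl τ)).toReal

/-- A tree is strongly positive if `μ_σ([T]) > 0` for every `σ ∈ T`. -/
def StronglyPositive (μ : Measure (ℕ → Bool)) (T : Set (List Bool)) : Prop :=
  ∀ σ ∈ T, 0 < relMeasure μ σ (paths T)

/-- A lower density function: a nonnegative rational-valued function on a
finite nonempty domain of strings of equal length. -/
structure LDF where
  dom : Finset (List Bool)
  val : List Bool → ℚ
  dom_nonempty : dom.Nonempty
  nonneg : ∀ σ ∈ dom, 0 ≤ val σ
  eq_length : ∀ σ ∈ dom, ∀ τ ∈ dom, σ.length = τ.length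

/-- `e` extends `d`: every element of `⟨e⟩` extends an element of `⟨d⟩`,
every element of `⟨d⟩` has an extension in `⟨e⟩`, and for each `σ ∈ ⟨d⟩`,
`d(σ)·2^{-|σ|} ≤ Σ_{τ ∈ ⟨e⟩, σ ⊑ τ} e(τ)·2^{-|τ|}`. -/
def LDF.Extends (e d : LDF) : Prop :=
  (∀ τ ∈ e.dom, ∃ σ ∈ d.dom, σ <+: τ) ∧
  (∀ σ ∈ d.dom, ∃ τ ∈ e.dom, σ <+: τ) ∧
  ∀ σ ∈ d.dom, d.val σ * (2 : ℚ)⁻¹ ^ σ.length ≤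
    ∑ τ ∈ e.dom.filter (fun τ => σ <+: τ), e.val τ * (2 : ℚ)⁻¹ ^ τ.length

/-- A tree `T` is `d`-dense: `⟨d⟩` is the full level of `T` at the common
length of `⟨d⟩`, and for some rational `ε > 0`, `d(σ) + ε ≤ μ_σ([T])` for
each `σ ∈ ⟨d⟩`. -/
def LDF.DenseIn (d : LDF) (μ : Measure (ℕ → Bool)) (T : Set (List Bool)) : Prop :=
  ∃ ε : ℚ, 0 < ε ∧ (∃ l : ℕ, ∀ σ : List Bool, σ ∈ d.dom ↔ (σ ∈ T ∧ σ.length = l)) ∧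
    ∀ σ ∈ d.dom, (d.val σ : ℝ) + (ε : ℝ) ≤ relMeasure μ σ (paths T)

/-!
Finitely many strict inequalities `d(σ) < μ_σ([T])` leave room for one factor `c < 1` with
`d(σ) < c · μ_σ([T])` for all `σ ∈ ⟨d⟩`. Any rational choice `c · μ_τ([T]) < e(τ) < μ_τ([T])` on
`E` then works: the cylinders of the strings of `E` above `σ` cover `[T] ∩ ⟦σ⟧`, so summing
`e(τ) · 2^{-|τ|}` over them recovers at least `c · μ([T] ∩ ⟦σ⟧) ≥ d(σ) · 2^{-|σ|}`.
-/

open Filter Topology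

section FinitelyManyStrictInequalities

variable {ι : Type*} {s : Finset ι} {f g : ι → ℝ}

theorem exists_mem_Ioo_forall_lt_mul (h : ∀ i ∈ s, f i < g i) :
    ∃ c ∈ Set.Ioo (0 : ℝ) 1, ∀ i ∈ s, f i < c * g i := by
  have near_one : ∀ᶠ c in 𝓝[<] (1 : ℝ), ∀ i ∈ s, f i < c * g i := by
    refine (eventually_all_finset s).2 fun i hi => eventually_nhdsWithin_of_eventually_nhds ?_
    have cont : Continuous fun c : ℝ => c * g i := by fun_prop
    exact cont.continuousAt.eventually_const_lt (by simpa using h i hi)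
  exact (Eventually.and (Ioo_mem_nhdsLT one_pos) near_one).exists

theorem exists_pos_rat_forall_add_le (h : ∀ i ∈ s, f i < g i) :
    ∃ ε : ℚ, 0 < ε ∧ ∀ i ∈ s, f i + ε ≤ g i := by
  have near_zero : ∀ᶠ ε : ℚ in 𝓝[>] 0, ∀ i ∈ s, f i + ε ≤ g i := by
    refine (eventually_all_finset s).2 fun i hi => eventually_nhdsWithin_of_eventually_nhds ?_
    have cont : Continuous fun ε : ℚ => f i + (ε : ℝ) := by fun_prop
    have lt_near_zero : ∀ᶠ ε : ℚ in 𝓝 0, f i + ε < g i :=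
      cont.continuousAt.eventually_lt_const (by simpa using h i hi)
    exact lt_near_zero.mono fun _ => le_of_lt
  exact (eventually_mem_nhdsWithin.and near_zero).exists

end FinitelyManyStrictInequalities

theorem length_seg (x : ℕ → Bool) (n : ℕ) : (seg x n).length = n := by
  simp [seg]

theorem seg_prefix_seg (x : ℕ → Bool) {m n : ℕ} (h : m ≤ n) : seg x m <+: seg x n := by
  refine List.prefix_iff_eq_take.2 (List.ext_getElem ?_ ?_) <;> simp [seg, h]

theorem mem_cyl_seg (x : ℕ → Bool) (n : ℕ) : x ∈ cyl (seg x n) := by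
  simp [cyl, length_seg]

theorem prefix_seg_of_mem_cyl {x : ℕ → Bool} {σ : List Bool} {n : ℕ} (hx : x ∈ cyl σ)
    (hn : σ.length ≤ n) : σ <+: seg x n := by
  have seg_eq : seg x σ.length = σ := hx
  simpa only [seg_eq] using seg_prefix_seg x hn

section RelMeasure

variable {μ : Measure (ℕ → Bool)} {σ : List Bool} {A : Set (ℕ → Bool)}

theorem relMeasure_mul_inv_two_pow (μ : Measure (ℕ → Bool)) (σ : List Bool)
    (A : Set (ℕ → Bool)) :
    relMeasure μ σ A * (2 : ℝ)⁻¹ ^ σ.length = μ.real (A ∩ cyl σ) := by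
  rw [relMeasure, inv_pow, mul_right_comm, mul_inv_cancel₀ (by positivity), one_mul, Measure.real]

theorem measureReal_pos_of_relMeasure_pos (h : 0 < relMeasure μ σ A) : 0 < μ.real (A ∩ cyl σ) :=
  pos_of_mul_pos_right h (by positivity)

theorem nonempty_of_relMeasure_pos (h : 0 < relMeasure μ σ A) : (A ∩ cyl σ).Nonempty :=
  nonempty_of_measureReal_ne_zero (measureReal_pos_of_relMeasure_pos h).ne'

-- `relMeasure` goes through `ENNReal.toReal`, which sends `⊤` to `0`.
theorem measure_ne_top_of_relMeasure_pos (h : 0 < relMeasure μ σ A) : μ (A ∩ cyl σ) ≠ ⊤ :=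
  (ENNReal.toReal_pos_iff.1 (measureReal_pos_of_relMeasure_pos h)).2.ne

theorem inter_cyl_subset_biUnion {l : ℕ} {E : Finset (List Bool)} (hσ : σ.length ≤ l)
    (hE : ∀ x ∈ A, seg x l ∈ E) :
    A ∩ cyl σ ⊆ ⋃ τ ∈ E.filter (σ <+: ·), A ∩ cyl τ := by
  rintro x ⟨hxA, hxσ⟩
  have seg_mem : seg x l ∈ E.filter (σ <+: ·) :=
    Finset.mem_filter.2 ⟨hE x hxA, prefix_seg_of_mem_cyl hxσ hσ⟩
  exact Set.mem_biUnion seg_mem ⟨hxA, mem_cyl_seg x l⟩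

theorem relMeasure_mul_inv_two_pow_le_sum {l : ℕ} {E : Finset (List Bool)} (hσ : σ.length ≤ l)
    (hE : ∀ x ∈ A, seg x l ∈ E) (hfin : ∀ τ ∈ E, μ (A ∩ cyl τ) ≠ ⊤) :
    relMeasure μ σ A * (2 : ℝ)⁻¹ ^ σ.length ≤
      ∑ τ ∈ E.filter (σ <+: ·), relMeasure μ τ A * (2 : ℝ)⁻¹ ^ τ.length := by
  simp only [relMeasure_mul_inv_two_pow]
  have union_ne_top : μ (⋃ τ ∈ E.filter (σ <+: ·), A ∩ cyl τ) ≠ ⊤ :=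
    (measure_biUnion_lt_top (Finset.finite_toSet _) fun τ hτ =>
      (hfin τ (Finset.mem_filter.1 hτ).1).lt_top).ne
  exact (measureReal_mono (inter_cyl_subset_biUnion hσ hE) union_ne_top).trans
    (measureReal_biUnion_finset_le _ _)

end RelMeasure

/-- `E` is the level `T ∩ 2^l` of the tree `T`, as a finite set of strings, stated
pointwise so that it unfolds to the level clause of `LDF.DenseIn`. -/
def IsLevel (E : Finset (List Bool)) (T : Set (List Bool)) (l : ℕ) : Prop :=
  ∀ σ : List Bool, σ ∈ E ↔ (σ ∈ T ∧ σ.length = l)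

namespace IsLevel

variable {μ : Measure (ℕ → Bool)} {T : Set (List Bool)} {D E : Finset (List Bool)} {k l : ℕ}

theorem seg_mem (hE : IsLevel E T l) {x : ℕ → Bool} (hx : x ∈ paths T) : seg x l ∈ E :=
  (hE _).2 ⟨hx l, length_seg x l⟩

theorem exists_prefix_mem (hT : IsTree T) (hD : IsLevel D T k) (hE : IsLevel E T l) (hkl : k ≤ l)
    {τ : List Bool} (hτ : τ ∈ E) : ∃ σ ∈ D, σ <+: τ := by
  obtain ⟨hτT, hτl⟩ := (hE τ).1 hτ
  have take_prefix : τ.take k <+: τ := List.take_prefix k τ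
  exact ⟨τ.take k, (hD _).2 ⟨hT τ hτT _ take_prefix, by simp [hτl, hkl]⟩, take_prefix⟩

theorem exists_extension_mem (hE : IsLevel E T l) {σ : List Bool}
    (hσ : 0 < relMeasure μ σ (paths T)) (hσl : σ.length ≤ l) : ∃ τ ∈ E, σ <+: τ := by
  obtain ⟨x, hxT, hxσ⟩ := nonempty_of_relMeasure_pos hσ
  exact ⟨seg x l, hE.seg_mem hxT, prefix_seg_of_mem_cyl hxσ hσl⟩

end IsLevel

namespace LDF

variable {μ : Measure (ℕ → Bool)} {T : Set (List Bool)}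

theorem denseIn_iff_forall_lt {d : LDF} :
    d.DenseIn μ T ↔
      (∃ l, IsLevel d.dom T l) ∧ ∀ σ ∈ d.dom, (d.val σ : ℝ) < relMeasure μ σ (paths T) := by
  constructor
  · rintro ⟨ε, hε, hlevel, hd⟩
    have cast_pos : (0 : ℝ) < ε := Rat.cast_pos.2 hε
    exact ⟨hlevel, fun σ hσ => (lt_add_of_pos_right _ cast_pos).trans_le (hd σ hσ)⟩
  · rintro ⟨hlevel, hlt⟩
    obtain ⟨ε, hε, hd⟩ := exists_pos_rat_forall_add_le hlt
    exact ⟨ε, hε, hlevel, hd⟩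

theorem mul_inv_two_pow_le_sum_val {e : LDF} {l : ℕ} {c : ℝ} (hsp : StronglyPositive μ T)
    (he : IsLevel e.dom T l) (hc : 0 ≤ c)
    (hce : ∀ τ ∈ e.dom, c * relMeasure μ τ (paths T) ≤ e.val τ)
    {σ : List Bool} {q : ℚ} (hσ : σ.length ≤ l) (hqc : q ≤ c * relMeasure μ σ (paths T)) :
    q * (2 : ℚ)⁻¹ ^ σ.length ≤
      ∑ τ ∈ e.dom.filter (σ <+: ·), e.val τ * (2 : ℚ)⁻¹ ^ τ.length := by
  have hfin : ∀ τ ∈ e.dom, μ (paths T ∩ cyl τ) ≠ ⊤ := fun τ hτ =>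
    measure_ne_top_of_relMeasure_pos (hsp τ ((he τ).1 hτ).1)
  have real_le : (q : ℝ) * (2 : ℝ)⁻¹ ^ σ.length ≤
      ∑ τ ∈ e.dom.filter (σ <+: ·), (e.val τ : ℝ) * (2 : ℝ)⁻¹ ^ τ.length :=
    calc (q : ℝ) * (2 : ℝ)⁻¹ ^ σ.length
      _ ≤ c * relMeasure μ σ (paths T) * (2 : ℝ)⁻¹ ^ σ.length := by gcongr
      _ ≤ c * ∑ τ ∈ e.dom.filter (σ <+: ·),
            relMeasure μ τ (paths T) * (2 : ℝ)⁻¹ ^ τ.length := by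
          rw [mul_assoc]
          gcongr
          exact relMeasure_mul_inv_two_pow_le_sum hσ (fun _ => he.seg_mem) hfin
      _ = ∑ τ ∈ e.dom.filter (σ <+: ·),
            c * relMeasure μ τ (paths T) * (2 : ℝ)⁻¹ ^ τ.length := by
          simp only [Finset.mul_sum, mul_assoc]
      _ ≤ ∑ τ ∈ e.dom.filter (σ <+: ·), (e.val τ : ℝ) * (2 : ℝ)⁻¹ ^ τ.length := by
          gcongr with τ hτ
          exact hce τ (Finset.mem_filter.1 hτ).1
  rw [← Rat.cast_le (K := ℝ)]
  push_cast
  exact real_le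

end LDF

theorem ldf_extension_general (μ : Measure (ℕ → Bool)) (d : LDF) (T : Set (List Bool))
    (hT : IsTree T) (hsp : StronglyPositive μ T) (hdense : d.DenseIn μ T)
    (l : ℕ) (hl : ∀ σ ∈ d.dom, σ.length ≤ l) (E : Finset (List Bool)) (hE : IsLevel E T l) :
    ∃ e : LDF, e.dom = E ∧ e.Extends d ∧ e.DenseIn μ T := by
  obtain ⟨⟨k, hk⟩, hlt⟩ := LDF.denseIn_iff_forall_lt.1 hdense
  obtain ⟨σ₀, hσ₀⟩ := d.dom_nonempty
  have hkl : k ≤ l := ((hk σ₀).1 hσ₀).2 ▸ hl σ₀ hσ₀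
  have hextend : ∀ σ ∈ d.dom, ∃ τ ∈ E, σ <+: τ := fun σ hσ =>
    hE.exists_extension_mem (hsp σ ((hk σ).1 hσ).1) (hl σ hσ)
  have hpos : ∀ τ ∈ E, 0 < relMeasure μ τ (paths T) := fun τ hτ => hsp τ ((hE τ).1 hτ).1
  obtain ⟨c, ⟨hc0, hc1⟩, hdc⟩ := exists_mem_Ioo_forall_lt_mul hlt
  choose! v hcv hvlt using fun τ hτ => exists_rat_btwn (mul_lt_of_lt_one_left (hpos τ hτ) hc1)
  let e : LDF :=
    { dom := E
      val := v
      dom_nonempty := (hextend σ₀ hσ₀).imp fun _ => And.left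
      nonneg := fun τ hτ => Rat.cast_nonneg.1 ((mul_pos hc0 (hpos τ hτ)).trans (hcv τ hτ)).le
      eq_length := fun σ hσ τ hτ => ((hE σ).1 hσ).2.trans ((hE τ).1 hτ).2.symm }
  have hext : e.Extends d :=
    ⟨fun _ => hk.exists_prefix_mem hT hE hkl, hextend, fun σ hσ =>
      LDF.mul_inv_two_pow_le_sum_val hsp hE hc0.le (fun τ hτ => (hcv τ hτ).le) (hl σ hσ)
        (hdc σ hσ).le⟩
  exact ⟨e, rfl, hext, LDF.denseIn_iff_forall_lt.2 ⟨⟨l, hE⟩, hvlt⟩⟩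

/-- **Extension of lower density functions to deeper levels.**
Let `d` be a lower density function and `T` an infinite, strongly positive,
`d`-dense tree.  Let `E = T ∩ 2^l` for some `l` at least the common length
of `⟨d⟩`.  Then there is a lower density function `e` with domain `E`
extending `d` such that `T` is `e`-dense.
(`μ` is the fair-coin measure, characterized by its values on cylinders.) -/
theorem ldf_extension (μ : Measure (ℕ → Bool))
    (hμ : ∀ σ : List Bool, μ (cyl σ) = (2 : ENNReal)⁻¹ ^ σ.length)
    (d : LDF) (T : Set (List Bool)) (hT : IsTree T) (hinf : T.Infinite)
    (hsp : StronglyPositive μ T) (hdense : d.DenseIn μ T)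
    (l : ℕ) (hl : ∀ σ ∈ d.dom, σ.length ≤ l)
    (E : Finset (List Bool)) (hE : ∀ σ : List Bool, σ ∈ E ↔ (σ ∈ T ∧ σ.length = l)) :
    ∃ e : LDF, e.dom = E ∧ e.Extends d ∧ e.DenseIn μ T :=
  ldf_extension_general μ d T hT hsp hdense l hl E hE
end

section
/- Let k be a natural number, a ≥ 0 a real, and for each string σ of length k let H_σ ⊆ 2^ω be measurable with Σ_{σ of length k} μ(H_σ) ≤ a. Let M be a positive integer with 2a < M, and let W ⊆ 2^ω be measurable with μ(W) > 3/4. Then there exists a set D of strings of length k with |D| ≤ M such that μ(W ∩ {x ∈ 2^ω : every string σ of length k with x ∈ H_σ belongs to D}) > 2^{−2^k − 2}. -/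
open MeasureTheory

/-!
By Markov's inequality for the number of `σ` with `x ∈ H σ`, the points lying in at least `M` of the
sets `H σ` have measure at most `a / M ≤ 1 / 2`, so more than `1 / 4` of `W` remains. The map
sending `x` to `{σ | x ∈ H σ}` takes at most `2 ^ (2 ^ k)` values, so one of its fibres carries more
than `2 ^ (-2 ^ k) / 4` of what remains; its value is `D`.
-/

section HitSet

open scoped Finset ENNReal

variable {α ι β : Type*}

open Classical in
/-- The indices `i ∈ S` whose set `H i` contains `x`, for a finite set `S` of indices. -/
noncomputable def hitSet (S : Finset ι) (H : ι → Set α) (x : α) : Finset ι :=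
  {i ∈ S | x ∈ H i}

theorem mem_hitSet {S : Finset ι} {H : ι → Set α} {x : α} {i : ι} :
    i ∈ hitSet S H x ↔ i ∈ S ∧ x ∈ H i := by
  classical exact Finset.mem_filter

theorem hitSet_subset (S : Finset ι) (H : ι → Set α) (x : α) : hitSet S H x ⊆ S := fun _ hi =>
  (mem_hitSet.1 hi).1

theorem hitSet_mono (S : Finset ι) {H K : ι → Set α} (hHK : ∀ i, H i ⊆ K i) (x : α) :
    hitSet S H x ⊆ hitSet S K x := fun i hi =>
  mem_hitSet.2 ⟨(mem_hitSet.1 hi).1, hHK i (mem_hitSet.1 hi).2⟩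

theorem card_hitSet_eq_sum_indicator (S : Finset ι) (H : ι → Set α) (x : α) :
    (#(hitSet S H x) : ℝ≥0∞) = ∑ i ∈ S, (H i).indicator 1 x := by
  classical
  simp [hitSet, Set.indicator_apply]

variable [MeasurableSpace α] (μ : Measure α)

theorem lintegral_card_hitSet (S : Finset ι) {H : ι → Set α} (hH : ∀ i, MeasurableSet (H i)) :
    ∫⁻ x, #(hitSet S H x) ∂μ = ∑ i ∈ S, μ (H i) := by
  simp_rw [card_hitSet_eq_sum_indicator]
  rw [lintegral_finsetSum _ fun i _ => measurable_one.indicator (hH i)]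
  exact Finset.sum_congr rfl fun i _ => lintegral_indicator_one (hH i)

theorem measurable_card_hitSet (S : Finset ι) {H : ι → Set α} (hH : ∀ i, MeasurableSet (H i)) :
    Measurable fun x => (#(hitSet S H x) : ℝ≥0∞) := by
  simp_rw [card_hitSet_eq_sum_indicator]
  exact Finset.measurable_sum _ fun i _ => measurable_one.indicator (hH i)

-- Replacing each `H i` by its measurable hull only enlarges the hit sets and keeps the sum.
theorem mul_measure_le_card_hitSet_le_sum (S : Finset ι) (H : ι → Set α) (M : ℕ) :
    M * μ {x | M ≤ #(hitSet S H x)} ≤ ∑ i ∈ S, μ (H i) := by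
  set K : ι → Set α := fun i => toMeasurable μ (H i)
  have hK (i) : MeasurableSet (K i) := measurableSet_toMeasurable μ (H i)
  have hHK (x) : #(hitSet S H x) ≤ #(hitSet S K x) :=
    Finset.card_le_card (hitSet_mono S (fun i => subset_toMeasurable μ (H i)) x)
  calc M * μ {x | M ≤ #(hitSet S H x)}
      ≤ M * μ {x | (M : ℝ≥0∞) ≤ #(hitSet S K x)} := by
        gcongr with x
        exact fun hx => Nat.cast_le.2 (hx.trans (hHK x))
    _ ≤ ∫⁻ x, #(hitSet S K x) ∂μ := mul_meas_ge_le_lintegral (measurable_card_hitSet S hK) _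
    _ = ∑ i ∈ S, μ (K i) := lintegral_card_hitSet μ S hK
    _ = ∑ i ∈ S, μ (H i) := Finset.sum_congr rfl fun i _ => measure_toMeasurable (H i)

theorem exists_lt_measure_inter_fiber {A : Set α} {f : α → β} {T : Finset β} {c : ℝ≥0∞}
    (hf : Set.MapsTo f A T) (hA : #T * c < μ A) :
    ∃ b ∈ T, c < μ (A ∩ f ⁻¹' {b}) := by
  have hcover : A ⊆ ⋃ b ∈ T, A ∩ f ⁻¹' {b} := fun x hx =>
    Set.mem_biUnion (hf hx) ⟨hx, rfl⟩
  have hsum : ∑ _b ∈ T, c < ∑ b ∈ T, μ (A ∩ f ⁻¹' {b}) :=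
    calc ∑ _b ∈ T, c = #T * c := by rw [Finset.sum_const, nsmul_eq_mul]
      _ < μ A := hA
      _ ≤ μ (⋃ b ∈ T, A ∩ f ⁻¹' {b}) := measure_mono hcover
      _ ≤ ∑ b ∈ T, μ (A ∩ f ⁻¹' {b}) := measure_biUnion_finset_le _ _
  exact Finset.exists_lt_of_sum_lt hsum

theorem hitting_selection_general {S : Finset ι} {H : ι → Set α} {W : Set α} {M : ℕ} {c : ℝ≥0∞}
    (hM : M ≠ 0) (hW : (∑ i ∈ S, μ (H i)) / M + 2 ^ #S * c < μ W) :
    ∃ D ⊆ S, #D < M ∧ c < μ (W ∩ {x | ∀ i ∈ S, x ∈ H i → i ∈ D}) := by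
  set B : Set α := {x | M ≤ #(hitSet S H x)}
  have hB : μ B ≤ (∑ i ∈ S, μ (H i)) / M := by
    rw [ENNReal.le_div_iff_mul_le (by simp [hM]) (by simp), mul_comm]
    exact mul_measure_le_card_hitSet_le_sum μ S H M
  have hWB : #S.powerset * c < μ (W \ B) :=
    calc #S.powerset * c = 2 ^ #S * c := by rw [Finset.card_powerset]; norm_cast
      _ < μ W - (∑ i ∈ S, μ (H i)) / M := lt_tsub_iff_left.2 hW
      _ ≤ μ W - μ B := tsub_le_tsub_left hB _
      _ ≤ μ (W \ B) := le_measure_sdiff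
  obtain ⟨D, hDS, hD⟩ := exists_lt_measure_inter_fiber μ (f := hitSet S H)
    (fun x _ => Finset.mem_powerset.2 (hitSet_subset S H x)) hWB
  obtain ⟨x, ⟨-, hxB⟩, rfl⟩ := nonempty_of_measure_ne_zero (ne_bot_of_gt hD)
  refine ⟨_, Finset.mem_powerset.1 hDS, not_le.1 hxB, hD.trans_le (measure_mono ?_)⟩
  rintro y ⟨⟨hyW, -⟩, hy : hitSet S H y = hitSet S H x⟩
  exact ⟨hyW, fun i hiS hyi => hy ▸ mem_hitSet.2 ⟨hiS, hyi⟩⟩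

end HitSet

section Words

variable (A : Type*) [Fintype A] (k : ℕ)

/-- The finite set of words of length `k` over a finite alphabet `A`. -/
def wordsOfLength : Finset (List A) :=
  Finset.univ.map ⟨List.ofFn (n := k), List.ofFn_injective⟩

variable {A k}

theorem mem_wordsOfLength {σ : List A} : σ ∈ wordsOfLength A k ↔ σ.length = k := by
  simp only [wordsOfLength, Finset.mem_map, Finset.mem_univ, true_and,
    Function.Embedding.coeFn_mk]
  constructor
  · rintro ⟨f, rfl⟩
    exact List.length_ofFn
  · rintro rfl
    exact ⟨σ.get, List.ofFn_get σ⟩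

theorem card_wordsOfLength : (wordsOfLength A k).card = Fintype.card A ^ k := by
  simp [wordsOfLength]

theorem sum_wordsOfLength {N : Type*} [AddCommMonoid N] (g : List A → N) :
    ∑ σ ∈ wordsOfLength A k, g σ = ∑ f : Fin k → A, g (List.ofFn f) :=
  Finset.sum_map _ _ _

end Words

section Constants

open scoped ENNReal

theorem ofReal_div_natCast_le_half {a : ℝ} {M : ℕ} (haM : 2 * a ≤ M) :
    ENNReal.ofReal a / M ≤ 2⁻¹ := by
  refine ENNReal.div_le_of_le_mul ?_
  calc ENNReal.ofReal a ≤ ENNReal.ofReal (2⁻¹ * M) := ENNReal.ofReal_le_ofReal (by linarith)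
    _ = 2⁻¹ * M := by
      rw [ENNReal.ofReal_mul (by norm_num), ENNReal.ofReal_natCast,
        ENNReal.ofReal_inv_of_pos two_pos, ENNReal.ofReal_ofNat]

theorem two_pow_mul_inv_two_pow_add (n m : ℕ) :
    (2 : ℝ≥0∞) ^ n * 2⁻¹ ^ (n + m) = 2⁻¹ ^ m := by
  rw [pow_add, ← mul_assoc, ← mul_pow, ENNReal.mul_inv_cancel two_ne_zero ENNReal.ofNat_ne_top,
    one_pow, one_mul]

theorem inv_two_add_inv_two_sq : (2⁻¹ + 2⁻¹ ^ 2 : ℝ≥0∞) = 3 / 4 := by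
  rw [← ENNReal.toReal_eq_toReal_iff' (by finiteness) (by finiteness),
    ENNReal.toReal_add (by finiteness) (by finiteness)]
  norm_num

theorem ofReal_div_add_two_pow_mul_le {a : ℝ} {M : ℕ} (haM : 2 * a ≤ M) (n : ℕ) :
    ENNReal.ofReal a / M + 2 ^ n * 2⁻¹ ^ (n + 2) ≤ 3 / 4 := by
  rw [two_pow_mul_inv_two_pow_add, ← inv_two_add_inv_two_sq]
  gcongr
  exact ofReal_div_natCast_le_half haM

end Constants

/-- **Hitting-set selection.**
Let `H_σ ⊆ 2^ω` (for each string `σ` of length `k`) be measurable sets with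
total measure at most `a`, let `M` be a positive integer with `2a < M`, and
let `W` be measurable with `μ(W) > 3/4`.  Then there is a set `D` of at most
`M` strings of length `k` such that the set of `x ∈ W` for which every
length-`k` string `σ` with `x ∈ H_σ` lies in `D` has measure `> 2^{-2^k-2}`.
(`μ` is the fair-coin measure, characterized by its values on cylinders;
the sum over the strings of length `k` is indexed by `Fin k → Bool`.) -/
theorem hitting_selection (μ : Measure (ℕ → Bool))
    (hμ : ∀ σ : List Bool, μ (cyl σ) = (2 : ENNReal)⁻¹ ^ σ.length)
    (k : ℕ) (a : ℝ) (ha : 0 ≤ a)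
    (H : List Bool → Set (ℕ → Bool))
    (hHm : ∀ σ : List Bool, σ.length = k → MeasurableSet (H σ))
    (hsum : ∑ f : Fin k → Bool, μ (H (List.ofFn f)) ≤ ENNReal.ofReal a)
    (M : ℕ) (hM : 0 < M) (haM : 2 * a < M)
    (W : Set (ℕ → Bool)) (hWm : MeasurableSet W)
    (hW : (3 / 4 : ENNReal) < μ W) :
    ∃ D : Finset (List Bool), (∀ σ ∈ D, σ.length = k) ∧ D.card ≤ M ∧
      (2 : ENNReal)⁻¹ ^ (2 ^ k + 2) <
        μ (W ∩ {x | ∀ σ : List Bool, σ.length = k → x ∈ H σ → σ ∈ D}) := by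
  have hmass : (∑ σ ∈ wordsOfLength Bool k, μ (H σ)) / M
      + 2 ^ (wordsOfLength Bool k).card * 2⁻¹ ^ (2 ^ k + 2) < μ W := by
    rw [sum_wordsOfLength, card_wordsOfLength, Fintype.card_bool]
    calc _ ≤ ENNReal.ofReal a / M + 2 ^ 2 ^ k * 2⁻¹ ^ (2 ^ k + 2) := by gcongr
      _ ≤ 3 / 4 := ofReal_div_add_two_pow_mul_le haM.le (2 ^ k)
      _ < μ W := hW
  obtain ⟨D, hDk, hDM, hD⟩ := hitting_selection_general μ hM.ne' hmass
  exact ⟨D, fun σ hσ => mem_wordsOfLength.1 (hDk hσ), hDM.le,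
    by simpa only [mem_wordsOfLength] using hD⟩
end
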